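/- (Inequality (1.18).) Define H(ξ) = ∫₀^{ξ²} K(√σ) dσ for ξ ≥ 0. Then for every ξ ≥ 0 one has K(ξ)·ξ² ≤ H(ξ) ≤ 2·K(ξ)·ξ². -/

import Mathlib

/-!
The substitution `σ = τ²` turns `H(ξ)` into `2 ∫₀^ξ τ K(τ) dτ`. Since `g` is nondecreasing, so is
the solution `s(τ)` of `s g(s) = τ`; hence `K(τ) = 1 / g(s(τ))` is nonincreasing while
`τ K(τ) = s(τ)` is nondecreasing. Bounding the integrand `τ K(τ)` from below by `τ K(ξ)` and from
above by `ξ K(ξ)` gives the two inequalities.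
-/

open Set intervalIntegral
open MeasureTheory (volume)

theorem monotoneOn_sum_mul_rpow {ι : Type*} {S : Finset ι} {a α : ι → ℝ}
    (ha : ∀ j ∈ S, 0 ≤ a j) (hα : ∀ j ∈ S, 0 ≤ α j) :
    MonotoneOn (fun t : ℝ => ∑ j ∈ S, a j * t ^ α j) (Ici 0) := fun _ hx _ _ hxy =>
  Finset.sum_le_sum fun j hj =>
    mul_le_mul_of_nonneg_left (Real.rpow_le_rpow hx hxy (hα j hj)) (ha j hj)

theorem monotoneOn_sum_range_mul_rpow {N : ℕ} {a α : ℕ → ℝ} (ha : ∀ j ≤ N, 0 ≤ a j)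
    (hα0 : 0 ≤ α 0) (hα : ∀ i < N, α i ≤ α (i + 1)) :
    MonotoneOn (fun t : ℝ => ∑ j ∈ Finset.range (N + 1), a j * t ^ α j) (Ici 0) := by
  have hα_mono : MonotoneOn α (Iic N) :=
    monotoneOn_of_le_add_one ordConnected_Iic fun i _ _ hi => hα i hi
  have hα_nonneg : ∀ j ≤ N, 0 ≤ α j := fun j hj =>
    hα0.trans (hα_mono (mem_Iic.mpr N.zero_le) hj j.zero_le)
  exact monotoneOn_sum_mul_rpow (fun j hj => ha j (Finset.mem_range_succ_iff.mp hj))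
    fun j hj => hα_nonneg j (Finset.mem_range_succ_iff.mp hj)

section ImplicitSolution

theorem monotoneOn_of_mul_comp_eq_self {R : Type*} [Semiring R] [LinearOrder R]
    [IsStrictOrderedRing R] {g s : R → R} (hg : MonotoneOn g (Ici 0))
    (hs : ∀ ξ, 0 < ξ → 0 ≤ s ξ ∧ s ξ * g (s ξ) = ξ) :
    MonotoneOn s (Ioi 0) := by
  intro x hx y hy hxy
  obtain ⟨hsx, hsx_eq⟩ := hs x hx
  obtain ⟨hsy, hsy_eq⟩ := hs y hy
  have hgx : 0 < g (s x) := pos_of_mul_pos_right (hsx_eq.symm ▸ hx) hsx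
  by_contra! hlt
  have hyx : y < x := calc
    y = s y * g (s y) := hsy_eq.symm
    _ ≤ s y * g (s x) := mul_le_mul_of_nonneg_left (hg hsy hsx hlt.le) hsy
    _ < s x * g (s x) := mul_lt_mul_of_pos_right hlt hgx
    _ = x := hsx_eq
  exact hyx.not_ge hxy

variable {𝕜 : Type*} [Field 𝕜] [LinearOrder 𝕜] [IsStrictOrderedRing 𝕜] {g s K : 𝕜 → 𝕜}

theorem antitoneOn_of_eq_one_div_comp (hg : MonotoneOn g (Ici 0))
    (hs : ∀ ξ, 0 < ξ → 0 ≤ s ξ ∧ s ξ * g (s ξ) = ξ) (hK : ∀ ξ, 0 < ξ → K ξ = 1 / g (s ξ)) :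
    AntitoneOn K (Ioi 0) := by
  intro x hx y hy hxy
  obtain ⟨hsx, hsx_eq⟩ := hs x hx
  have hgx : 0 < g (s x) := pos_of_mul_pos_right (hsx_eq.symm ▸ hx) hsx
  have hsxy : s x ≤ s y := monotoneOn_of_mul_comp_eq_self hg hs hx hy hxy
  rw [hK x hx, hK y hy]
  exact one_div_le_one_div_of_le hgx (hg hsx (hs y hy).1 hsxy)

theorem monotoneOn_self_mul_of_eq_one_div_comp (hg : MonotoneOn g (Ici 0))
    (hs : ∀ ξ, 0 < ξ → 0 ≤ s ξ ∧ s ξ * g (s ξ) = ξ) (hK : ∀ ξ, 0 < ξ → K ξ = 1 / g (s ξ)) :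
    MonotoneOn (fun ξ => ξ * K ξ) (Ici 0) := by
  have mul_K_eq : ∀ ξ, 0 < ξ → ξ * K ξ = s ξ := fun ξ hξ => by
    have hg_ne : g (s ξ) ≠ 0 := right_ne_zero_of_mul ((hs ξ hξ).2.symm ▸ hξ.ne')
    rw [hK ξ hξ, mul_one_div, div_eq_iff hg_ne, (hs ξ hξ).2]
  intro x hx y hy hxy
  rcases (mem_Ici.mp hx).eq_or_lt with rfl | hx_pos
  · rcases hxy.eq_or_lt with rfl | hy_pos
    · exact le_rfl
    · simpa only [zero_mul, mul_K_eq y hy_pos] using (hs y hy_pos).1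
  · have hy_pos : 0 < y := hx_pos.trans_le hxy
    simpa only [mul_K_eq x hx_pos, mul_K_eq y hy_pos] using
      monotoneOn_of_mul_comp_eq_self hg hs hx_pos hy_pos hxy

end ImplicitSolution

section SqrtSubstitution

theorem integral_comp_sqrt {E : Type*} [NormedAddCommGroup E] [NormedSpace ℝ E] (f : ℝ → E)
    {b : ℝ} (hb : 0 ≤ b) :
    ∫ σ in (0 : ℝ)..b ^ 2, f (√σ) = (2 : ℝ) • ∫ τ in (0 : ℝ)..b, τ • f τ := by
  have hderiv : ∀ τ ∈ Ioo (min 0 b) (max 0 b), HasDerivAt (· ^ 2) (2 * τ) τ :=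
    fun τ _ => by simpa using hasDerivAt_pow 2 τ
  have hderiv_nonneg : ∀ τ ∈ Ioo (min 0 b) (max 0 b), 0 ≤ 2 * τ := fun τ hτ => by
    rw [min_eq_left hb] at hτ
    exact mul_nonneg zero_le_two hτ.1.le
  calc ∫ σ in (0 : ℝ)..b ^ 2, f (√σ)
      = ∫ τ in (0 : ℝ)..b, (2 * τ) • f (√(τ ^ 2)) := by
        simpa using (integral_deriv_smul_comp_of_deriv_nonneg (g := fun σ => f (√σ))
          (continuous_pow 2).continuousOn hderiv hderiv_nonneg).symm
    _ = ∫ τ in (0 : ℝ)..b, (2 : ℝ) • τ • f τ := integral_congr fun τ hτ => by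
        rw [uIcc_of_le hb] at hτ
        simp only [Real.sqrt_sq hτ.1, mul_smul]
    _ = (2 : ℝ) • ∫ τ in (0 : ℝ)..b, τ • f τ := integral_smul _ _

variable {K : ℝ → ℝ} {b : ℝ}

theorem mul_sq_le_integral_comp_sqrt (hb : 0 ≤ b) (hK : AntitoneOn K (Ioc 0 b))
    (hint : IntervalIntegrable (fun τ => τ * K τ) volume 0 b) :
    K b * b ^ 2 ≤ ∫ σ in (0 : ℝ)..b ^ 2, K (√σ) := by
  have hle : ∀ τ ∈ Ioo 0 b, τ * K b ≤ τ * K τ := fun τ hτ =>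
    mul_le_mul_of_nonneg_left (hK ⟨hτ.1, hτ.2.le⟩ ⟨hτ.1.trans hτ.2, le_rfl⟩ hτ.2.le) hτ.1.le
  calc K b * b ^ 2 = 2 * ∫ τ in (0 : ℝ)..b, τ * K b := by
        rw [integral_mul_const, integral_id]
        ring
    _ ≤ 2 * ∫ τ in (0 : ℝ)..b, τ * K τ := by
        gcongr
        exact integral_mono_on_of_le_Ioo hb (intervalIntegrable_id.mul_const _) hint hle
    _ = ∫ σ in (0 : ℝ)..b ^ 2, K (√σ) := (integral_comp_sqrt K hb).symm

theorem integral_comp_sqrt_le_two_mul_mul_sq (hb : 0 ≤ b)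
    (hK : MonotoneOn (fun τ => τ * K τ) (Icc 0 b)) :
    ∫ σ in (0 : ℝ)..b ^ 2, K (√σ) ≤ 2 * (K b * b ^ 2) := by
  have hint : IntervalIntegrable (fun τ => τ * K τ) volume 0 b :=
    MonotoneOn.intervalIntegrable (by rwa [uIcc_of_le hb])
  calc ∫ σ in (0 : ℝ)..b ^ 2, K (√σ) = 2 * ∫ τ in (0 : ℝ)..b, τ * K τ := integral_comp_sqrt K hb
    _ ≤ 2 * ∫ _ in (0 : ℝ)..b, b * K b := by
        gcongr
        exact integral_mono_on hb hint intervalIntegrable_const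
          fun τ hτ => hK hτ (right_mem_Icc.mpr hb) hτ.2
    _ = 2 * (K b * b ^ 2) := by
        rw [integral_const, smul_eq_mul]
        ring

end SqrtSubstitution

theorem stmt10_general {g s K H : ℝ → ℝ} (hg : MonotoneOn g (Ici 0))
    (hs : ∀ ξ, 0 < ξ → 0 ≤ s ξ ∧ s ξ * g (s ξ) = ξ)
    (hK : ∀ ξ, 0 < ξ → K ξ = 1 / g (s ξ))
    (hH : ∀ ξ, 0 ≤ ξ → H ξ = ∫ σ in (0 : ℝ)..ξ ^ 2, K (√σ)) :
    ∀ ξ, 0 ≤ ξ → K ξ * ξ ^ 2 ≤ H ξ ∧ H ξ ≤ 2 * (K ξ * ξ ^ 2) := by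
  intro ξ hξ
  have hanti : AntitoneOn K (Ioi 0) := antitoneOn_of_eq_one_div_comp hg hs hK
  have hmono : MonotoneOn (fun τ => τ * K τ) (Icc 0 ξ) :=
    (monotoneOn_self_mul_of_eq_one_div_comp hg hs hK).mono Icc_subset_Ici_self
  have hint : IntervalIntegrable (fun τ => τ * K τ) volume 0 ξ :=
    MonotoneOn.intervalIntegrable (by rwa [uIcc_of_le hξ])
  rw [hH ξ hξ]
  exact ⟨mul_sq_le_integral_comp_sqrt hξ (hanti.mono Ioc_subset_Ioi_self) hint,
    integral_comp_sqrt_le_two_mul_mul_sq hξ hmono⟩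

/-- Inequality (1.18): with `H(ξ) = ∫₀^(ξ²) K(√σ) dσ` one has
`K(ξ) ξ² ≤ H(ξ) ≤ 2 K(ξ) ξ²` for all `ξ ≥ 0`. -/
theorem stmt10
    (N : ℕ) (hN : 1 ≤ N)
    (α : ℕ → ℝ) (hα0 : α 0 = 0) (hαmono : ∀ i < N, α i < α (i + 1))
    (aa : ℕ → ℝ) (ha0 : 0 < aa 0) (haN : 0 < aa N) (hann : ∀ j ≤ N, 0 ≤ aa j)
    (g : ℝ → ℝ)
    (hg : ∀ t : ℝ, 0 ≤ t → g t = ∑ j ∈ Finset.range (N + 1), aa j * t ^ α j)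
    (s : ℝ → ℝ) (hs : ∀ ξ : ℝ, 0 ≤ ξ → 0 ≤ s ξ ∧ s ξ * g (s ξ) = ξ)
    (K : ℝ → ℝ) (hK : ∀ ξ : ℝ, 0 ≤ ξ → K ξ = 1 / g (s ξ))
    (H : ℝ → ℝ)
    (hH : ∀ ξ : ℝ, 0 ≤ ξ → H ξ = ∫ σ in (0:ℝ)..(ξ ^ 2), K (Real.sqrt σ)) :
    ∀ ξ : ℝ, 0 ≤ ξ → K ξ * ξ ^ 2 ≤ H ξ ∧ H ξ ≤ 2 * (K ξ * ξ ^ 2) := by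
  have hg_mono : MonotoneOn g (Ici 0) := (monotoneOn_sum_range_mul_rpow hann hα0.ge
    fun i hi => (hαmono i hi).le).congr fun t ht => (hg t ht).symm
  exact stmt10_general hg_mono (fun ξ hξ => hs ξ hξ.le) (fun ξ hξ => hK ξ hξ.le) hH
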